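/- For all topological spaces X and Y and every commutative unital ring R, the R-linear map C_c⁰(X,R) ⊗_R C_c⁰(Y,R) → C_c⁰(X × Y,R) induced by the pairing (f,g) ↦ ((x,y) ↦ f(x)·g(y)) is an isomorphism of R-modules. -/

import Mathlib

/-!
The key finiteness fact is `exists_basis`: a locally constant map `F` takes only finitely many
values on a compact clopen set `K`, so every function of the form `φ ∘ F` vanishing off `K` is a
combination, with coefficients the values of `φ`, of the indicators of the pieces `K ∩ F⁻¹{v}`.

*Injectivity.* Write `t = ∑ fᵢ ⊗ gᵢ` and apply this to `F = (fᵢ)ᵢ`. Then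
`t = ∑ᵥ eᵥ ⊗ (∑ᵢ vᵢ gᵢ)`, where each `v` is a value `F(s)`; hence `∑ᵢ vᵢ gᵢ` is the slice at `s`
of the image of `t`, and it vanishes when that image does.

*Surjectivity.* For `h` in `C_c⁰(X × Y, R)` apply it to the slice map `F(x) = h(x, ·)`, getting
`h = ∑ᵥ eᵥ · v` with every `v` a slice of `h`. No separation axiom is available, so three things
need an argument: slices of a compact open set are compact (`isCompact_slice`), the projection of
a compact clopen set is closed (`isClosed_fst_image`), and therefore `F` is locally constant
(`isLocallyConstant_slice`).
-/


open TensorProduct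

/-- `C_c⁰(X,R)`: locally constant compactly supported `R`-valued functions on `X`,
as a submodule of the `R`-module of locally constant functions. -/
def Ccz (X : Type*) [TopologicalSpace X] (R : Type*) [CommRing R] :
    Submodule R (LocallyConstant X R) where
  carrier := {f | HasCompactSupport ⇑f}
  add_mem' {f g} hf hg := by
    simpa using hf.add hg
  zero_mem' := by
    simp only [Set.mem_setOf_eq, LocallyConstant.coe_zero]
    rw [HasCompactSupport, tsupport]
    simp
  smul_mem' r f hf := by
    simp only [Set.mem_setOf_eq, LocallyConstant.coe_smul]
    exact hf.mono (by simpa using Function.support_const_smul_subset r ⇑f)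

section

variable (X Y : Type*) [TopologicalSpace X] [TopologicalSpace Y]
  (R : Type*) [CommRing R]

/-- The product function `(x,y) ↦ f(x)·g(y)`, as a locally constant compactly
supported function on `X × Y`. -/
noncomputable def prodLC (f : LocallyConstant X R) (g : LocallyConstant Y R) :
    LocallyConstant (X × Y) R :=
  (LocallyConstant.comap ⟨Prod.fst, continuous_fst⟩ f) *
    (LocallyConstant.comap ⟨Prod.snd, continuous_snd⟩ g)

lemma prodLC_apply (f : LocallyConstant X R) (g : LocallyConstant Y R) (p : X × Y) :
    prodLC X Y R f g p = f p.1 * g p.2 := by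
  simp [prodLC, LocallyConstant.coe_comap]

/-- The product function `(x,y) ↦ f(x)·g(y)`, as a locally constant compactly
supported function on `X × Y`. -/
noncomputable def prodFun (f : Ccz X R) (g : Ccz Y R) : Ccz (X × Y) R :=
  ⟨prodLC X Y R (f : LocallyConstant X R) (g : LocallyConstant Y R), by
    have hsub : Function.support ⇑(prodLC X Y R (f : LocallyConstant X R)
          (g : LocallyConstant Y R))
        ⊆ (Function.support ⇑(f : LocallyConstant X R)) ×ˢ
            (Function.support ⇑(g : LocallyConstant Y R)) := by
      rintro ⟨x, y⟩ hp
      rw [Function.mem_support, prodLC_apply] at hp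
      constructor
      · exact fun h0 => hp (by simp only [Function.mem_support, not_not] at h0; simp [h0])
      · exact fun h0 => hp (by simp only [Function.mem_support, not_not] at h0; simp [h0])
    refine IsCompact.of_isClosed_subset (f.2.prod g.2) (isClosed_closure) ?_
    refine (closure_mono hsub).trans ?_
    rw [closure_prod_eq]
    exact Set.Subset.rfl⟩

lemma prodFun_apply (f : Ccz X R) (g : Ccz Y R) (x : X) (y : Y) :
    ((prodFun X Y R f g : Ccz (X × Y) R) : LocallyConstant (X × Y) R) (x, y)
      = (f : LocallyConstant X R) x * (g : LocallyConstant Y R) y := rfl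

/-- The induced `R`-bilinear pairing `C_c⁰(X,R) × C_c⁰(Y,R) → C_c⁰(X × Y,R)`. -/
noncomputable def prodPairing : Ccz X R →ₗ[R] Ccz Y R →ₗ[R] Ccz (X × Y) R :=
  LinearMap.mk₂ R (prodFun X Y R)
    (fun a b g => Subtype.ext (LocallyConstant.ext fun p => by
      rw [show ((prodFun X Y R (a + b) g : Ccz (X × Y) R) : LocallyConstant (X × Y) R) p
          = ((a : LocallyConstant X R) p.1 + (b : LocallyConstant X R) p.1) *
              (g : LocallyConstant Y R) p.2 from rfl]
      rw [show ((prodFun X Y R a g + prodFun X Y R b g : Ccz (X × Y) R) :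
            LocallyConstant (X × Y) R) p
          = (a : LocallyConstant X R) p.1 * (g : LocallyConstant Y R) p.2 +
              (b : LocallyConstant X R) p.1 * (g : LocallyConstant Y R) p.2 from rfl]
      ring))
    (fun c a g => Subtype.ext (LocallyConstant.ext fun p => by
      rw [show ((prodFun X Y R (c • a) g : Ccz (X × Y) R) : LocallyConstant (X × Y) R) p
          = (c • (a : LocallyConstant X R) p.1) * (g : LocallyConstant Y R) p.2 from rfl]
      rw [show ((c • prodFun X Y R a g : Ccz (X × Y) R) : LocallyConstant (X × Y) R) p
          = c • ((a : LocallyConstant X R) p.1 * (g : LocallyConstant Y R) p.2) from rfl]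
      simp only [smul_eq_mul]
      ring))
    (fun f a b => Subtype.ext (LocallyConstant.ext fun p => by
      rw [show ((prodFun X Y R f (a + b) : Ccz (X × Y) R) : LocallyConstant (X × Y) R) p
          = (f : LocallyConstant X R) p.1 *
              ((a : LocallyConstant Y R) p.2 + (b : LocallyConstant Y R) p.2) from rfl]
      rw [show ((prodFun X Y R f a + prodFun X Y R f b : Ccz (X × Y) R) :
            LocallyConstant (X × Y) R) p
          = (f : LocallyConstant X R) p.1 * (a : LocallyConstant Y R) p.2 +
              (f : LocallyConstant X R) p.1 * (b : LocallyConstant Y R) p.2 from rfl]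
      ring))
    (fun c f a => Subtype.ext (LocallyConstant.ext fun p => by
      rw [show ((prodFun X Y R f (c • a) : Ccz (X × Y) R) : LocallyConstant (X × Y) R) p
          = (f : LocallyConstant X R) p.1 * (c • (a : LocallyConstant Y R) p.2) from rfl]
      rw [show ((c • prodFun X Y R f a : Ccz (X × Y) R) : LocallyConstant (X × Y) R) p
          = c • ((f : LocallyConstant X R) p.1 * (a : LocallyConstant Y R) p.2) from rfl]
      simp only [smul_eq_mul]
      ring))

/-- The induced `R`-linear map `C_c⁰(X,R) ⊗_R C_c⁰(Y,R) → C_c⁰(X × Y,R)`. -/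
noncomputable def prodMap : (Ccz X R) ⊗[R] (Ccz Y R) →ₗ[R] Ccz (X × Y) R :=
  TensorProduct.lift (prodPairing X Y R)

end

open Topology

section

variable {X Y : Type*} [TopologicalSpace X] [TopologicalSpace Y] {R : Type*} [CommRing R]

lemma isClopen_support (f : LocallyConstant X R) : IsClopen (Function.support f) :=
  ⟨⟨by
      have : (Function.support f)ᶜ = f ⁻¹' {0} := by ext; simp
      rw [this]; exact f.isLocallyConstant _⟩,
    f.isLocallyConstant {0}ᶜ⟩

lemma hasCompactSupport_iff (f : LocallyConstant X R) :
    HasCompactSupport f ↔ IsCompact (Function.support f) := by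
  rw [HasCompactSupport, tsupport, (isClopen_support f).isClosed.closure_eq]

/-- Points need not be closed, so the slice is obtained as the projection of
`K ∩ (closure {x} × Y)`: as `K` is open, moving from a point of `closure {x}` to `x` stays in
`K`. -/
lemma isCompact_slice {K : Set (X × Y)} (hK : IsCompact K) (ho : IsOpen K) (x : X) :
    IsCompact {y | (x, y) ∈ K} := by
  have h : {y | (x, y) ∈ K} = Prod.snd '' (K ∩ Prod.fst ⁻¹' closure {x}) := by
    ext y
    constructor
    · intro hy
      exact ⟨(x, y), ⟨hy, subset_closure rfl⟩, rfl⟩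
    · rintro ⟨⟨x', y'⟩, ⟨hp, hx'⟩, rfl⟩
      have hs : x ⤳ x' := specializes_iff_mem_closure.2 hx'
      exact (hs.prod (specializes_refl y')).mem_open ho hp
  rw [h]
  exact (hK.inter_right (isClosed_closure.preimage continuous_fst)).image continuous_snd

/-- The compact set `fst '' K` is covered by the slices of `K` at points of `Y`, which are clopen;
finitely many of them suffice, so it is a finite union of closed sets. -/
lemma isClosed_fst_image {K : Set (X × Y)} (hK : IsCompact K) (hc : IsClopen K) :
    IsClosed (Prod.fst '' K) := by
  have hcont : ∀ y : Y, Continuous fun x : X => (x, y) := fun y => by fun_prop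
  obtain ⟨T, hT⟩ := (hK.image continuous_fst).elim_finite_subcover
    (fun y : Y => {x : X | (x, y) ∈ K}) (fun y => hc.isOpen.preimage (hcont y)) (by
      rintro _ ⟨⟨x, y⟩, hp, rfl⟩
      exact Set.mem_iUnion.2 ⟨y, hp⟩)
  have h : Prod.fst '' K = ⋃ y ∈ T, {x : X | (x, y) ∈ K} := by
    refine hT.antisymm ?_
    intro x hx
    simp only [Set.mem_iUnion] at hx
    obtain ⟨y, -, hy⟩ := hx
    exact ⟨(x, y), hy, rfl⟩
  rw [h]
  exact T.finite_toSet.isClosed_biUnion fun y _ => hc.isClosed.preimage (hcont y)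

lemma isLocallyConstant_slice (h : LocallyConstant (X × Y) R)
    (hK : IsCompact (Function.support h)) :
    IsLocallyConstant fun (x : X) (y : Y) => h (x, y) := by
  rw [IsLocallyConstant.iff_eventually_eq]
  intro x₀
  set V : Set Y := {y | (x₀, y) ∈ Function.support h} with hV
  have hsupp := isClopen_support h
  have hVc : IsCompact V := isCompact_slice hK hsupp.isOpen x₀
  have hVo : IsClopen V := hsupp.preimage (by fun_prop : Continuous fun y : Y => (x₀, y))
  -- On `V`, the slices at `x` and `x₀` agree for `x` near `x₀` by the tube lemma.
  have h1 : ∀ᶠ x in 𝓝 x₀, ∀ y ∈ V, h (x, y) = h (x₀, y) := by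
    refine hVc.eventually_forall_of_forall_eventually
      (P := fun x y => h (x, y) = h (x₀, y)) fun y _ => ?_
    have e1 := (IsLocallyConstant.iff_eventually_eq h).1 h.isLocallyConstant (x₀, y)
    have e2 : ∀ᶠ z : X × Y in 𝓝 (x₀, y), h (x₀, z.2) = h (x₀, y) :=
      ((by fun_prop : Continuous fun z : X × Y => (x₀, z.2)).tendsto (x₀, y)).eventually e1
    filter_upwards [e1, e2] with z hz1 hz2
    exact hz1.trans hz2.symm
  -- Off `V`, the slice at `x₀` vanishes, and so do the nearby ones, since the projection of
  -- the part of the support lying over the complement of `V` is closed and misses `x₀`.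
  have hVp : IsClopen (Prod.snd ⁻¹' Vᶜ : Set (X × Y)) := hVo.compl.preimage continuous_snd
  have h2 : ∀ᶠ x in 𝓝 x₀, x ∉ Prod.fst '' (Function.support h ∩ Prod.snd ⁻¹' Vᶜ) := by
    refine (isClosed_fst_image (hK.inter_right hVp.isClosed)
      (hsupp.inter hVp)).isOpen_compl.mem_nhds ?_
    rintro ⟨⟨x, y⟩, ⟨hp, hy⟩, rfl⟩
    exact hy hp
  filter_upwards [h1, h2] with x hx1 hx2
  funext y
  by_cases hy : y ∈ V
  · exact hx1 y hy
  · have a : h (x₀, y) = 0 := by simpa [hV] using hy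
    rw [a]
    by_contra hne
    exact hx2 ⟨(x, y), ⟨hne, hy⟩, rfl⟩

/-- The functions `e v` are the indicators of the pieces `K ∩ F⁻¹{v}`, for the finitely many
values `v ∈ A` that `F` takes on `K`. -/
lemma exists_basis (R : Type*) [CommRing R] {α : Type*} {F : X → α} (hF : IsLocallyConstant F)
    {K : Set X} (hK : IsCompact K) (hc : IsClopen K) :
    ∃ (A : Finset α) (e : α → Ccz X R), (∀ v ∈ A, ∃ s, F s = v) ∧
      ∀ φ : α → R, (∀ x ∉ K, φ (F x) = 0) →
        ∀ x, φ (F x) = ∑ v ∈ A, (e v : LocallyConstant X R) x * φ v := by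
  classical
  have hfin : (F '' K).Finite := by
    letI : TopologicalSpace α := ⊥
    haveI : DiscreteTopology α := ⟨rfl⟩
    exact (hK.image hF.continuous).finite_of_discrete
  have hcl : ∀ v, IsClopen (K ∩ F ⁻¹' {v}) := fun v => hc.inter (hF.isClopen_fiber v)
  let e : α → Ccz X R := fun v => ⟨LocallyConstant.charFn R (hcl v), by
    refine (hasCompactSupport_iff _).2 (hK.of_isClosed_subset (isClopen_support _).isClosed ?_)
    rw [LocallyConstant.coe_charFn]
    exact Set.support_indicator_subset.trans Set.inter_subset_left⟩
  have he : ∀ v x, (e v : LocallyConstant X R) x = if x ∈ K ∧ F x = v then 1 else 0 := by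
    intro v x
    change LocallyConstant.charFn R (hcl v) x = _
    rw [LocallyConstant.coe_charFn, Set.indicator_apply]
    rfl
  refine ⟨hfin.toFinset, e, ?_, ?_⟩
  · intro v hv
    obtain ⟨s, -, hs⟩ := hfin.mem_toFinset.1 hv
    exact ⟨s, hs⟩
  · intro φ hφ x
    simp only [he]
    by_cases hx : x ∈ K
    · have hm : F x ∈ hfin.toFinset := hfin.mem_toFinset.2 ⟨x, hx, rfl⟩
      rw [Finset.sum_eq_single_of_mem (F x) hm]
      · simp [hx]
      · intro v _ hv
        simp [Ne.symm hv]
    · simp [hx, hφ x hx]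

lemma Ccz.ext_apply {f g : Ccz X R}
    (h : ∀ x, (f : LocallyConstant X R) x = (g : LocallyConstant X R) x) : f = g :=
  Subtype.ext (LocallyConstant.ext h)

lemma Ccz.sum_apply {ι : Type*} (s : Finset ι) (f : ι → Ccz X R) (x : X) :
    ((∑ i ∈ s, f i : Ccz X R) : LocallyConstant X R) x
      = ∑ i ∈ s, (f i : LocallyConstant X R) x :=
  map_sum ((LocallyConstant.evalₗ R x).comp (Ccz X R).subtype) f s

lemma prodMap_tmul (f : Ccz X R) (g : Ccz Y R) :
    prodMap X Y R (f ⊗ₜ g) = prodFun X Y R f g := rfl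

lemma prodMap_injective : Function.Injective (prodMap X Y R) := by
  rw [injective_iff_map_eq_zero]
  intro t ht
  obtain ⟨S, rfl⟩ := TensorProduct.exists_finset t
  have hF : IsLocallyConstant fun (x : X) (i : S) => (i.1.1 : LocallyConstant X R) x := by
    rw [IsLocallyConstant.iff_eventually_eq]
    intro x
    have : ∀ᶠ y in 𝓝 x, ∀ i : S,
        (i.1.1 : LocallyConstant X R) y = (i.1.1 : LocallyConstant X R) x :=
      Filter.eventually_all.2 fun i => (IsLocallyConstant.iff_eventually_eq _).1
        (i.1.1 : LocallyConstant X R).isLocallyConstant x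
    filter_upwards [this] with y hy
    exact funext hy
  have hK : IsCompact (⋃ i : S, Function.support (i.1.1 : LocallyConstant X R)) :=
    isCompact_iUnion fun i => (hasCompactSupport_iff _).1 i.1.1.2
  obtain ⟨A, e, hA, he⟩ := exists_basis R hF hK
    (isClopen_iUnion_of_finite fun i => isClopen_support _)
  have hf : ∀ i : S, i.1.1 = ∑ v ∈ A, v i • e v := by
    intro i
    refine Ccz.ext_apply fun x => ?_
    rw [Ccz.sum_apply]
    refine (he (fun v => v i) (fun x hx => ?_) x).trans
      (Finset.sum_congr rfl fun v _ => mul_comm _ _)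
    by_contra hne
    exact hx (Set.mem_iUnion.2 ⟨i, hne⟩)
  -- The slice at `s` of the image of the tensor is `∑ᵢ fᵢ(s) gᵢ`.
  have hg : ∀ v ∈ A, ∑ i : S, v i • i.1.2 = 0 := by
    intro v hv
    obtain ⟨s, rfl⟩ := hA v hv
    refine Ccz.ext_apply fun y => ?_
    rw [Ccz.sum_apply]
    have h0 := congrArg
      (fun k : Ccz (X × Y) R => (k : LocallyConstant (X × Y) R) (s, y)) ht
    simp only [map_sum, Ccz.sum_apply, prodMap_tmul, prodFun_apply] at h0
    rw [← Finset.sum_coe_sort S] at h0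
    exact h0
  rw [← Finset.sum_coe_sort S]
  calc ∑ i : S, i.1.1 ⊗ₜ[R] i.1.2
      = ∑ i : S, ∑ v ∈ A, e v ⊗ₜ[R] (v i • i.1.2) := by
        refine Finset.sum_congr rfl fun i _ => ?_
        conv_lhs => rw [hf i]
        rw [TensorProduct.sum_tmul]
        exact Finset.sum_congr rfl fun v _ => TensorProduct.smul_tmul _ _ _
    _ = ∑ v ∈ A, e v ⊗ₜ[R] ∑ i : S, v i • i.1.2 := by
        rw [Finset.sum_comm]
        simp only [TensorProduct.tmul_sum]
    _ = 0 := Finset.sum_eq_zero fun v hv => by rw [hg v hv, TensorProduct.tmul_zero]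

lemma prodMap_surjective : Function.Surjective (prodMap X Y R) := by
  rintro ⟨h, hh⟩
  have hK : IsCompact (Function.support h) := (hasCompactSupport_iff h).1 hh
  have hsupp := isClopen_support h
  obtain ⟨A, e, hA, he⟩ := exists_basis R (isLocallyConstant_slice h hK)
    (hK.image continuous_fst)
    ⟨isClosed_fst_image hK hsupp, isOpenMap_fst _ hsupp.isOpen⟩
  choose s hs using hA
  let g : X → Ccz Y R := fun x =>
    ⟨LocallyConstant.comap ⟨fun y => (x, y), by fun_prop⟩ h,
      (hasCompactSupport_iff _).2 (isCompact_slice hK hsupp.isOpen x)⟩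
  refine ⟨∑ v : A, e v.1 ⊗ₜ[R] g (s v.1 v.2), Ccz.ext_apply ?_⟩
  rintro ⟨x, y⟩
  simp only [map_sum, Ccz.sum_apply, prodMap_tmul, prodFun_apply]
  have hxy := he (fun v => v y) (fun x hx => ?_) x
  · rw [← Finset.sum_coe_sort A] at hxy
    refine Eq.trans (Finset.sum_congr rfl fun v _ => ?_) hxy.symm
    exact congrArg _ (congrFun (hs v.1 v.2) y)
  · by_contra hne
    exact hx ⟨(x, y), hne, rfl⟩

end

/-- For all topological spaces `X`, `Y` and every commutative unital ring `R`, the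
`R`-linear map `C_c⁰(X,R) ⊗_R C_c⁰(Y,R) → C_c⁰(X × Y,R)` induced by
`(f,g) ↦ ((x,y) ↦ f(x)·g(y))` is an isomorphism of `R`-modules. -/
theorem prodMap_bijective (X Y : Type*) [TopologicalSpace X] [TopologicalSpace Y]
    (R : Type*) [CommRing R] :
    Function.Bijective (prodMap X Y R) := by
  exact ⟨prodMap_injective, prodMap_surjective⟩
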